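/- Let M be a loopless matroid on the ground set E = {0,1,…,n}. Then the quantity ∑_{F ∋ i} β(M|F)·β(M/F), where the sum ranges over all flats F of M with ∅ ≠ F ≠ E that contain i, is independent of the choice of the element i ∈ E. -/

import Mathlib

open Matroid Set

/-- The Möbius function of a collection of "flats" (finsets), defined recursively:
`mob flats F G = 0` if `F ⊄ G`, `1` if `F = G`, and `-∑_{F ⊆ G' ⊊ G} mob flats F G'` otherwise,
the sum being over members `G'` of `flats`. -/
noncomputable def mob {α : Type*} [DecidableEq α] (flats : Finset (Finset α)) :
    Finset α → Finset α → ℤ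
  | F, G =>
    if F ⊆ G then
      if F = G then 1
      else - ∑ G' ∈ (flats.filter fun G' => F ⊆ G' ∧ G' ⊂ G).attach,
        mob flats F G'.1
    else 0
termination_by F G => G.card
decreasing_by
  exact Finset.card_lt_card (Finset.mem_filter.mp G'.2).2.2

/-- The rank of a set `X` in a matroid `M`: the largest cardinality of an independent
subset of `X`. -/
noncomputable def rk {α : Type*} (M : Matroid α) (X : Set α) : ℕ :=
  sSup (Set.ncard '' {I | M.Indep I ∧ I ⊆ X})

/-- An element `e` is a loop of `M` if it belongs to the ground set but to no base. -/
def mLoop {α : Type*} (M : Matroid α) (e : α) : Prop :=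
  e ∈ M.E ∧ ∀ B, M.IsBase B → e ∉ B

/-- An element `e` is a coloop of `M` if it belongs to every base. -/
def mColoop {α : Type*} (M : Matroid α) (e : α) : Prop :=
  ∀ B, M.IsBase B → e ∈ B

/-- A matroid is loopless if it has no loops. -/
def mLoopless {α : Type*} (M : Matroid α) : Prop := ∀ e, ¬ mLoop M e

/-- Contraction of a set `C` in a matroid `M`, defined by duality:
`M / C = (M✶ \ C)✶`, where deletion is restriction to the complement. -/
noncomputable def mContr {α : Type*} (M : Matroid α) (C : Set α) : Matroid α :=
  (M✶ ↾ (M✶.E \ C))✶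

/-- The minor `M|G/F` of `M` obtained by restricting to `G` and contracting `F`. -/
noncomputable def mMinor {α : Type*} (M : Matroid α) (G F : Set α) : Matroid α :=
  mContr (M ↾ G) F

open Classical in
/-- The finset of all flats of a matroid on `Fin m`, as finsets. -/
noncomputable def flatsF {m : ℕ} (M : Matroid (Fin m)) : Finset (Finset (Fin m)) :=
  Finset.univ.filter fun F => M.IsFlat ↑F

open Classical in
/-- The beta invariant `β(M) = (-1)^{r(M)} ∑_{F ∈ L(M)} μ(∅,F) r(F)` of a loopless
matroid `M`; it is `0` if `M` has a loop. -/
noncomputable def betaInv {m : ℕ} (M : Matroid (Fin m)) : ℤ :=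
  if mLoopless M then
    (-1) ^ (rk M M.E) * ∑ F ∈ flatsF M, mob (flatsF M) ∅ F * (rk M ↑F : ℤ)
  else 0

/-- The 0/1 indicator vector of a finset `S ⊆ {0,…,m-1}`, as a vector in `ℝ^m`. -/
def eVec {m : ℕ} (S : Finset (Fin m)) : Fin m → ℝ := fun i => if i ∈ S then 1 else 0

section Mobius

variable {α : Type*} [DecidableEq α] {L L' : Finset (Finset α)}

theorem mob_self (L : Finset (Finset α)) (F : Finset α) : mob L F F = 1 := by
  rw [mob]; simp

theorem mob_eq_zero {F G : Finset α} (h : ¬ F ⊆ G) : mob L F G = 0 := by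
  rw [mob]; simp [h]

theorem mob_of_ssubset {F G : Finset α} (h : F ⊂ G) :
    mob L F G = - ∑ G' ∈ L with F ⊆ G' ∧ G' ⊂ G, mob L F G' := by
  rw [mob, if_pos h.subset, if_neg h.ne]
  exact congrArg _ (Finset.sum_attach (L.filter fun G' => F ⊆ G' ∧ G' ⊂ G) (mob L F))

/-- The Möbius function is a left inverse of the zeta function. -/
theorem sum_mob_left {F G : Finset α} (hF : F ∈ L) (hG : G ∈ L) :
    ∑ H ∈ L with H ⊆ G, mob L F H = if F = G then 1 else 0 := by
  have hsupp : ∑ H ∈ L with H ⊆ G, mob L F H = ∑ H ∈ L with F ⊆ H ∧ H ⊆ G, mob L F H := by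
    refine (Finset.sum_subset (fun H hH => ?_) fun H hH hH' => mob_eq_zero fun hFH => hH' ?_).symm
    · simp only [Finset.mem_filter] at hH ⊢
      exact ⟨hH.1, hH.2.2⟩
    · simp only [Finset.mem_filter] at hH ⊢
      exact ⟨hH.1, hFH, hH.2⟩
  rw [hsupp]
  split_ifs with hFG
  · subst hFG
    have : (L.filter fun H => F ⊆ H ∧ H ⊆ F) = {F} := by
      ext H
      simp only [Finset.mem_filter, Finset.mem_singleton]
      exact ⟨fun h => h.2.2.antisymm h.2.1, by rintro rfl; exact ⟨hF, subset_rfl, subset_rfl⟩⟩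
    rw [this, Finset.sum_singleton, mob_self]
  by_cases hsub : F ⊆ G
  · have : (L.filter fun H => F ⊆ H ∧ H ⊆ G) = insert G (L.filter fun H => F ⊆ H ∧ H ⊂ G) := by
      ext H
      simp only [Finset.mem_filter, Finset.mem_insert]
      constructor
      · rintro ⟨h1, h2, h3⟩
        rcases h3.eq_or_ssubset with h | h
        · exact Or.inl h
        · exact Or.inr ⟨h1, h2, h⟩
      · rintro (rfl | ⟨h1, h2, h3⟩)
        · exact ⟨hG, hsub, subset_rfl⟩
        · exact ⟨h1, h2, h3.subset⟩
    rw [this, Finset.sum_insert (by simp),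
      mob_of_ssubset (hsub.ssubset_of_ne hFG), neg_add_cancel]
  · refine Finset.sum_eq_zero fun H hH => ?_
    simp only [Finset.mem_filter] at hH
    exact absurd (hH.2.1.trans hH.2.2) hsub

/-- The Möbius function is a right inverse of the zeta function. -/
theorem sum_mob_right {H K : Finset α} (hH : H ∈ L) (hK : K ∈ L) :
    ∑ F ∈ L with H ⊆ F, mob L F K = if H = K then 1 else 0 := by
  let Z : Matrix L L ℤ := Matrix.of fun A B => if A.1 ⊆ B.1 then 1 else 0
  let U : Matrix L L ℤ := Matrix.of fun A B => mob L A.1 B.1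
  have hUZ : U * Z = 1 := by
    ext A B
    have h := sum_mob_left A.2 B.2
    rw [Finset.sum_filter, ← Finset.sum_coe_sort] at h
    simp only [Matrix.mul_apply, U, Z, Matrix.of_apply, mul_ite, mul_one, mul_zero, h,
      Matrix.one_apply, Subtype.ext_iff]
  have hZU : (Z * U) ⟨H, hH⟩ ⟨K, hK⟩ = (1 : Matrix L L ℤ) ⟨H, hH⟩ ⟨K, hK⟩ := by
    rw [mul_eq_one_comm.mp hUZ]
  simp only [Matrix.mul_apply, U, Z, Matrix.of_apply, ite_mul, one_mul, zero_mul,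
    Matrix.one_apply, Subtype.ext_iff] at hZU
  rw [Finset.sum_filter, ← Finset.sum_coe_sort, ← hZU]

/-- A generalized form of Weisner's theorem: if `c` sends each member of `L` to the smallest member
of `L` containing it and the element `i`, then `∑ μ(∅, H) f(c H)` vanishes. -/
theorem sum_mob_mul_join_eq_zero {i : α} {c : Finset α → Finset α} (h0 : ∅ ∈ L)
    (hc : ∀ H ∈ L, c H ∈ L) (hic : ∀ H ∈ L, i ∈ c H)
    (hle : ∀ H ∈ L, ∀ G ∈ L, i ∈ G → (c H ⊆ G ↔ H ⊆ G))
    (f : Finset α → ℤ) {F : Finset α} (hF : F ∈ L) (hi : i ∈ F) :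
    ∑ H ∈ L with H ⊆ F, mob L ∅ H * f (c H) = 0 := by
  have hfib : ∀ G ∈ L, i ∈ G → ∑ H ∈ L with c H = G, mob L ∅ H = 0 := by
    intro G
    induction G using Finset.strongInduction with
    | H G ih =>
      intro hG hiG
      have htot := sum_mob_left h0 hG
      rw [if_neg (Finset.ne_empty_of_mem hiG).symm,
        ← Finset.sum_fiberwise_of_maps_to (s := L.filter (· ⊆ G))
          (t := L.filter fun G' => i ∈ G' ∧ G' ⊆ G) (g := c)] at htot
      · rw [Finset.sum_eq_single G] at htot
        · rw [← htot]
          refine Finset.sum_congr (Finset.ext fun H => ?_) fun _ _ => rfl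
          simp only [Finset.mem_filter]
          exact ⟨fun h => ⟨⟨h.1, (hle H h.1 G hG hiG).1 h.2.subset⟩, h.2⟩,
            fun h => ⟨h.1.1, h.2⟩⟩
        · intro G' hG' hne
          simp only [Finset.mem_filter] at hG'
          rw [← ih G' (hG'.2.2.ssubset_of_ne hne) hG'.1 hG'.2.1]
          refine Finset.sum_congr (Finset.ext fun H => ?_) fun _ _ => rfl
          simp only [Finset.mem_filter]
          exact ⟨fun h => ⟨h.1.1, h.2⟩,
            fun h => ⟨⟨h.1, (hle H h.1 G hG hiG).1 (h.2.subset.trans hG'.2.2)⟩, h.2⟩⟩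
        · intro h
          exact absurd (by simp [hG, hiG]) h
      · intro H hH
        simp only [Finset.mem_filter] at hH ⊢
        exact ⟨hc H hH.1, hic H hH.1, (hle H hH.1 G hG hiG).2 hH.2⟩
  rw [← Finset.sum_fiberwise_of_maps_to (s := L.filter (· ⊆ F))
    (t := L.filter fun G' => i ∈ G' ∧ G' ⊆ F) (g := c)]
  · refine Finset.sum_eq_zero fun G hG => ?_
    simp only [Finset.mem_filter] at hG
    rw [← mul_zero (f G), ← hfib G hG.1 hG.2.1, Finset.mul_sum]
    refine Finset.sum_congr (Finset.ext fun H => ?_) fun H hH => ?_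
    · simp only [Finset.mem_filter]
      exact ⟨fun h => ⟨h.1.1, h.2⟩,
        fun h => ⟨⟨h.1, (hle H h.1 F hF hi).1 (h.2.subset.trans hG.2.2)⟩, h.2⟩⟩
    · rw [(Finset.mem_filter.1 hH).2, mul_comm]
  · intro H hH
    simp only [Finset.mem_filter] at hH ⊢
    exact ⟨hc H hH.1, hic H hH.1, (hle H hH.1 F hF hi).2 hH.2⟩

theorem sum_upper_beta (r : Finset α → ℤ) {E H : Finset α} (hE : E ∈ L)
    (htop : ∀ F ∈ L, F ⊆ E) (hH : H ∈ L) :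
    ∑ F ∈ L with H ⊆ F, ∑ K ∈ L, mob L F K * (r K - r F) = r H - r E := by
  have hone : ∀ F ∈ L, ∑ K ∈ L, mob L F K = if F = E then 1 else 0 := by
    intro F hF
    rw [← sum_mob_left hF hE, Finset.filter_true_of_mem htop]
  have hr : ∑ F ∈ L with H ⊆ F, ∑ K ∈ L, mob L F K * r K = r H := by
    rw [Finset.sum_comm, Finset.sum_congr rfl fun K hK => by
      rw [← Finset.sum_mul, sum_mob_right hH hK]]
    simp [hH]
  have hE' : ∑ F ∈ L with H ⊆ F, ∑ K ∈ L, mob L F K * r F = r E := by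
    rw [Finset.sum_congr rfl fun F hF => by
      rw [← Finset.sum_mul, hone F (Finset.mem_filter.1 hF).1]]
    simp [hE, htop H hH]
  simp only [mul_sub, Finset.sum_sub_distrib, hr, hE']

/-- The convolution of lower and upper beta invariants over the members of `L` containing `i`,
expressed without reference to `i`. -/
theorem two_mul_sum_beta {i : α} {c : Finset α → Finset α} {r : Finset α → ℤ} {E : Finset α}
    (h0 : ∅ ∈ L) (hE : E ∈ L) (htop : ∀ F ∈ L, F ⊆ E) (hiE : i ∈ E)
    (hc : ∀ H ∈ L, c H ∈ L) (hic : ∀ H ∈ L, i ∈ c H)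
    (hle : ∀ H ∈ L, ∀ G ∈ L, i ∈ G → (c H ⊆ G ↔ H ⊆ G))
    (hr : ∀ H ∈ L, r (c H) = r H + if i ∈ H then 0 else 1) :
    2 * ∑ F ∈ L with i ∈ F,
      (∑ H ∈ L with H ⊆ F, mob L ∅ H * r H) * (∑ K ∈ L, mob L F K * (r K - r F)) =
    ∑ H ∈ L, mob L ∅ H * (r H ^ 2 + r H - 2 * r E * r H) := by
  have hlow : ∀ F ∈ L, i ∈ F →
      ∑ H ∈ L with H ⊆ F, mob L ∅ H * r H =
        ∑ H ∈ L with H ⊆ F, mob L ∅ H * if i ∈ H then 1 else 0 := by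
    intro F hF hi
    have h1 := sum_mob_mul_join_eq_zero h0 hc hic hle r hF hi
    have h2 := sum_mob_left h0 hF
    rw [if_neg (Finset.ne_empty_of_mem hi).symm] at h2
    have h3 : ∑ H ∈ L with H ⊆ F, mob L ∅ H * r (c H) = ∑ H ∈ L with H ⊆ F, mob L ∅ H * r H +
        ∑ H ∈ L with H ⊆ F, mob L ∅ H -
          ∑ H ∈ L with H ⊆ F, mob L ∅ H * if i ∈ H then 1 else 0 := by
      rw [← Finset.sum_add_distrib, ← Finset.sum_sub_distrib]
      refine Finset.sum_congr rfl fun H hH => ?_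
      rw [hr H (Finset.mem_filter.1 hH).1]
      split_ifs <;> ring
    linarith
  have hsum : ∑ F ∈ L with i ∈ F,
      (∑ H ∈ L with H ⊆ F, mob L ∅ H * r H) * (∑ K ∈ L, mob L F K * (r K - r F)) =
      ∑ H ∈ L with i ∈ H, mob L ∅ H * (r H - r E) := by
    rw [Finset.sum_congr rfl fun F hF => by
      rw [hlow F (Finset.mem_filter.1 hF).1 (Finset.mem_filter.1 hF).2, Finset.sum_mul]]
    have hup : ∀ H ∈ L.filter (i ∈ ·), mob L ∅ H * (r H - r E) =
        ∑ F ∈ L with H ⊆ F, mob L ∅ H * ∑ K ∈ L, mob L F K * (r K - r F) := fun H hH => by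
      rw [← sum_upper_beta r hE htop (Finset.mem_filter.1 hH).1, Finset.mul_sum]
    rw [Finset.sum_congr rfl hup]
    simp only [Finset.sum_filter]
    have hite : ∀ (p : Prop) [Decidable p] (f : Finset α → ℤ),
        (if p then ∑ H ∈ L, f H else 0) = ∑ H ∈ L, if p then f H else 0 := by
      intro p _ f
      split_ifs <;> simp
    simp only [hite]
    rw [Finset.sum_comm]
    refine Finset.sum_congr rfl fun H _ => Finset.sum_congr rfl fun F _ => ?_
    by_cases h1 : i ∈ H <;> by_cases h2 : H ⊆ F <;> simp [h1, h2]
    exact fun h => absurd (h2 h1) h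
  have hlin := hlow E hE hiE
  have hsq := sum_mob_mul_join_eq_zero h0 hc hic hle (fun G => r G ^ 2) hE hiE
  have hone := sum_mob_left h0 hE
  rw [if_neg (Finset.ne_empty_of_mem hiE).symm] at hone
  rw [Finset.filter_true_of_mem htop] at hlin hsq hone
  have hsq' : ∑ H ∈ L, mob L ∅ H * r H ^ 2 + ∑ H ∈ L, mob L ∅ H * (2 * r H + 1)
      - ∑ H ∈ L, (mob L ∅ H * if i ∈ H then 1 else 0)
      - 2 * ∑ H ∈ L, (mob L ∅ H * if i ∈ H then r H else 0) = 0 := by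
    rw [Finset.mul_sum, ← Finset.sum_add_distrib, ← Finset.sum_sub_distrib,
      ← Finset.sum_sub_distrib]
    refine Eq.trans (Finset.sum_congr rfl fun H hH => ?_) hsq
    rw [hr H hH]
    split_ifs <;> ring
  have hsplit : ∑ H ∈ L with i ∈ H, mob L ∅ H * (r H - r E) =
      ∑ H ∈ L, (mob L ∅ H * if i ∈ H then r H else 0)
      - r E * ∑ H ∈ L, (mob L ∅ H * if i ∈ H then 1 else 0) := by
    rw [Finset.sum_filter, Finset.mul_sum, ← Finset.sum_sub_distrib]
    refine Finset.sum_congr rfl fun H _ => ?_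
    split_ifs <;> ring
  have hlhs : ∑ H ∈ L, mob L ∅ H * (r H ^ 2 + r H - 2 * r E * r H) =
      ∑ H ∈ L, mob L ∅ H * r H ^ 2 + (1 - 2 * r E) * ∑ H ∈ L, mob L ∅ H * r H := by
    rw [Finset.mul_sum, ← Finset.sum_add_distrib]
    exact Finset.sum_congr rfl fun H _ => by ring
  have hmid : ∑ H ∈ L, mob L ∅ H * (2 * r H + 1) = 2 * ∑ H ∈ L, mob L ∅ H * r H := by
    rw [← add_zero (2 * _), ← hone, Finset.mul_sum, ← Finset.sum_add_distrib]
    exact Finset.sum_congr rfl fun H _ => by ring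
  rw [hsum, hsplit, hlhs]
  rw [hmid, ← hlin] at hsq'
  rw [← hlin]
  linear_combination -hsq'

/-- The Möbius value `μ(F, G)` only depends on the members of `L` contained in `G`. -/
theorem mob_filter_subset (F : Finset α) {G T : Finset α} (hGT : G ⊆ T) :
    mob (L.filter (· ⊆ T)) F G = mob L F G := by
  induction G using Finset.strongInduction with
  | H G ih =>
    by_cases hFG : F ⊆ G
    · rcases hFG.eq_or_ssubset with rfl | hss
      · rw [mob_self, mob_self]
      · rw [mob_of_ssubset hss, mob_of_ssubset hss]
        refine congrArg _ (Finset.sum_congr (Finset.ext fun H => ?_) fun H hH => ?_)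
        · simp only [Finset.mem_filter]
          exact ⟨fun h => ⟨h.1.1, h.2⟩, fun h => ⟨⟨h.1, h.2.2.subset.trans hGT⟩, h.2⟩⟩
        · have hHG := (Finset.mem_filter.1 hH).2.2
          exact ih H hHG (hHG.subset.trans hGT)
    · rw [mob_eq_zero hFG, mob_eq_zero hFG]

/-- If `L'` consists of the sets `G \ F` with `F ⊆ G ∈ L`, then the Möbius function of `L'` at the
bottom is the Möbius function of `L` at `F`. -/
theorem mob_sdiff {F : Finset α} (hL : ∀ G, G ∈ L' ↔ Disjoint G F ∧ G ∪ F ∈ L)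
    {G : Finset α} (hFG : F ⊆ G) : mob L' ∅ (G \ F) = mob L F G := by
  induction G using Finset.strongInduction with
  | H G ih =>
    rcases hFG.eq_or_ssubset with rfl | hss
    · rw [Finset.sdiff_self, mob_self, mob_self]
    · have hne : ∅ ⊂ G \ F := by
        rw [Finset.empty_ssubset, Finset.sdiff_nonempty]
        exact hss.2
      rw [mob_of_ssubset hss, mob_of_ssubset hne]
      refine congrArg _ (Finset.sum_bij' (fun H _ => H ∪ F) (fun H _ => H \ F) ?_ ?_ ?_ ?_ ?_)
      · intro H hH
        simp only [Finset.mem_filter, hL] at hH ⊢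
        obtain ⟨⟨hd, hm⟩, -, hlt⟩ := hH
        refine ⟨hm, Finset.subset_union_right,
          Finset.union_subset (hlt.subset.trans Finset.sdiff_subset) hFG, fun h => hlt.2 (sdiff_le_iff'.2 h)⟩
      · intro H hH
        simp only [Finset.mem_filter, hL] at hH ⊢
        obtain ⟨hm, hFH, hlt⟩ := hH
        refine ⟨⟨Finset.sdiff_disjoint, by rwa [Finset.sdiff_union_of_subset hFH]⟩,
          Finset.empty_subset _, Finset.sdiff_subset_sdiff hlt.subset subset_rfl,
          fun h => hlt.2 ?_⟩
        rw [← Finset.sdiff_union_of_subset hFG, ← Finset.sdiff_union_of_subset hFH]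
        exact Finset.union_subset_union_left h
      · intro H hH
        simp only [Finset.mem_filter, hL] at hH
        exact Finset.union_sdiff_cancel_right hH.1.1
      · intro H hH
        simp only [Finset.mem_filter] at hH
        exact Finset.sdiff_union_of_subset hH.2.1
      · intro H hH
        simp only [Finset.mem_filter, hL] at hH
        obtain ⟨⟨hd, hm⟩, -, hlt⟩ := hH
        rw [← ih (H ∪ F) ⟨Finset.union_subset (hlt.subset.trans Finset.sdiff_subset) hFG,
          fun h => hlt.2 (sdiff_le_iff'.2 h)⟩
          Finset.subset_union_right, Finset.union_sdiff_cancel_right hd]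

end Mobius

section Rank

variable {α : Type*} [Finite α] {M : Matroid α} {I X : Set α}

theorem rk_eq_ncard (hI : M.IsBasis' I X) : rk M X = I.ncard := by
  refine IsGreatest.csSup_eq ⟨⟨I, ⟨hI.indep, hI.subset⟩, rfl⟩, ?_⟩
  rintro _ ⟨J, ⟨hJ, hJX⟩, rfl⟩
  have h := hJ.encard_le_eRk_of_subset hJX
  rw [hI.eRk_eq_encard, ← (Set.toFinite J).cast_ncard_eq, ← (Set.toFinite I).cast_ncard_eq] at h
  exact_mod_cast h

theorem cast_rk (M : Matroid α) (X : Set α) : (rk M X : ℕ∞) = M.eRk X := by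
  obtain ⟨I, hI⟩ := M.exists_isBasis' X
  rw [rk_eq_ncard hI, hI.eRk_eq_encard, (Set.toFinite I).cast_ncard_eq]

theorem rk_restrict {R : Set α} (h : X ⊆ R) : rk (M ↾ R) X = rk M X := by
  have := M.restrict_eRk_eq h
  rw [← cast_rk, ← cast_rk] at this
  exact_mod_cast this

theorem rk_closure_insert_of_notMem {e : α} (he : e ∈ M.E) (heX : e ∉ M.closure X) :
    rk M (M.closure (insert e X)) = rk M X + 1 := by
  have := M.eRk_closure_eq (insert e X)
  rw [eRk_insert_eq_add_one ⟨he, heX⟩, ← cast_rk, ← cast_rk] at this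
  exact_mod_cast this

theorem rk_contract_add {F : Set α} (hFX : F ⊆ X) : rk (M ／ F) (X \ F) + rk M F = rk M X := by
  obtain ⟨J, hJ⟩ := M.exists_isBasis' F
  obtain ⟨I, hI, hJI⟩ := hJ.indep.subset_isBasis'_of_subset (hJ.subset.trans hFX)
  have hIF : I ∩ F = J :=
    (hJ.eq_of_subset_indep (hI.indep.inter_right F) (subset_inter hJI hJ.subset)
      inter_subset_right).symm
  have hun : I \ F ∪ J = I := by rw [← hIF, Set.sdiff_union_inter]
  rw [rk_eq_ncard hI, rk_eq_ncard hJ,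
    rk_eq_ncard (hI.contract_isBasis' hJ (by rw [hun]; exact hI.indep)), ← hIF, add_comm,
    Set.ncard_inter_add_ncard_sdiff_eq_ncard]

end Rank

theorem mLoopless_iff {α : Type*} {M : Matroid α} : mLoopless M ↔ M.Loopless := by
  rw [loopless_iff_forall_not_isLoop]
  refine ⟨fun h e he hl => h e ⟨he, ?_⟩, fun h e hl => h e hl.1 ?_⟩
  · exact (isLoop_iff_forall_notMem_isBase he).1 hl
  · exact (isLoop_iff_forall_notMem_isBase hl.1).2 hl.2

theorem isFlat_restrict_iff {α : Type*} {M : Matroid α} {F X : Set α} (hF : M.IsFlat F) :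
    (M ↾ F).IsFlat X ↔ M.IsFlat X ∧ X ⊆ F := by
  refine ⟨fun h => ?_, fun h => ?_⟩
  · have hXF : X ⊆ F := h.subset_ground
    refine ⟨?_, hXF⟩
    rw [isFlat_iff_closure_eq, M.restrict_closure_eq hXF hF.subset_ground,
      inter_eq_self_of_subset_left (hF.closure ▸ M.closure_subset_closure hXF)] at h
    rwa [isFlat_iff_closure_eq]
  · rw [isFlat_iff_closure_eq, M.restrict_closure_eq h.2 hF.subset_ground, h.1.closure,
      inter_eq_self_of_subset_left h.2]

theorem isFlat_contract_iff {α : Type*} {M : Matroid α} {F X : Set α} (hF : F ⊆ M.E) :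
    (M ／ F).IsFlat X ↔ Disjoint X F ∧ M.IsFlat (X ∪ F) := by
  rw [isFlat_iff_closure_eq, isFlat_iff_closure_eq, contract_closure_eq]
  have hsub : F ⊆ M.closure (X ∪ F) :=
    M.subset_closure_of_subset' subset_union_right hF
  refine ⟨fun h => ⟨?_, ?_⟩, fun h => ?_⟩
  · rw [← h]
    exact disjoint_sdiff_left
  · conv_rhs => rw [← h, Set.sdiff_union_of_subset hsub]
  · rw [h.2, union_sdiff_cancel_right]
    exact h.1.le_bot

section Beta

variable {m : ℕ} {M : Matroid (Fin m)} {F : Finset (Fin m)}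

theorem mem_flatsF {G : Finset (Fin m)} : G ∈ flatsF M ↔ M.IsFlat ↑G := by
  simp [flatsF]

theorem betaInv_restrict (hM : mLoopless M) (hF : F ∈ flatsF M) :
    betaInv (M ↾ (F : Set (Fin m))) = (-1) ^ rk M ↑F *
      ∑ H ∈ flatsF M with H ⊆ F, mob (flatsF M) ∅ H * (rk M ↑H : ℤ) := by
  rw [mem_flatsF] at hF
  have hfl : flatsF (M ↾ (F : Set (Fin m))) = (flatsF M).filter (· ⊆ F) := by
    ext G
    rw [Finset.mem_filter, mem_flatsF, mem_flatsF, isFlat_restrict_iff hF, Finset.coe_subset]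
  have hloop : mLoopless (M ↾ (F : Set (Fin m))) := by
    rw [mLoopless_iff] at hM ⊢
    exact (restrict_isRestriction M _ hF.subset_ground).loopless
  rw [betaInv, if_pos hloop, restrict_ground_eq, rk_restrict subset_rfl, hfl]
  congr 1
  refine Finset.sum_congr rfl fun H hH => ?_
  have hHF := (Finset.mem_filter.1 hH).2
  rw [mob_filter_subset _ hHF, rk_restrict (Finset.coe_subset.2 hHF)]

theorem betaInv_contract (hF : F ∈ flatsF M) :
    betaInv (mContr M ↑F) = (-1) ^ (rk M M.E - rk M ↑F) *
      ∑ K ∈ flatsF M, mob (flatsF M) F K * ((rk M ↑K : ℤ) - rk M ↑F) := by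
  rw [mem_flatsF] at hF
  change betaInv (M ／ (F : Set (Fin m))) = _
  have hloop : mLoopless (M ／ (F : Set (Fin m))) := by
    rw [mLoopless_iff, loopless_iff, contract_loops_eq, hF.closure, sdiff_self]
  have hfl : ∀ G, G ∈ flatsF (M ／ (F : Set (Fin m))) ↔ Disjoint G F ∧ G ∪ F ∈ flatsF M := by
    intro G
    rw [mem_flatsF, mem_flatsF, isFlat_contract_iff hF.subset_ground, Finset.coe_union,
      Finset.disjoint_coe]
  rw [betaInv, if_pos hloop, contract_ground, ← rk_contract_add hF.subset_ground,
    Nat.add_sub_cancel]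
  congr 1
  rw [← Finset.sum_filter_of_ne (p := fun K => F ⊆ K) (s := flatsF M)]
  · refine Finset.sum_bij' (fun H _ => H ∪ F) (fun K _ => K \ F) ?_ ?_ ?_ ?_ ?_
    · intro H hH
      exact Finset.mem_filter.2 ⟨((hfl H).1 hH).2, Finset.subset_union_right⟩
    · intro K hK
      obtain ⟨hK, hFK⟩ := Finset.mem_filter.1 hK
      exact (hfl _).2 ⟨Finset.sdiff_disjoint, by rwa [Finset.sdiff_union_of_subset hFK]⟩
    · intro H hH
      exact Finset.union_sdiff_cancel_right ((hfl H).1 hH).1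
    · intro K hK
      exact Finset.sdiff_union_of_subset (Finset.mem_filter.1 hK).2
    · intro H hH
      have hd := ((hfl H).1 hH).1
      have hr := rk_contract_add (M := M) (X := ↑(H ∪ F)) (F := ↑F)
        (Finset.coe_subset.2 Finset.subset_union_right)
      rw [← Finset.coe_sdiff, Finset.union_sdiff_cancel_right hd] at hr
      rw [← mob_sdiff hfl Finset.subset_union_right, Finset.union_sdiff_cancel_right hd, ← hr]
      push_cast
      ring
  · intro K _ hne
    by_contra h
    exact hne (by rw [mob_eq_zero h, zero_mul])

/-- Up to sign, twice the sum of the products of the beta invariants of `M|F` and `M/F` over the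
proper flats `F` containing `i` is an expression that does not involve `i`. -/
theorem two_mul_sum_betaInv {n : ℕ} {M : Matroid (Fin (n + 1))} (hE : M.E = Set.univ)
    (hM : mLoopless M) (i : Fin (n + 1)) :
    2 * ∑ F ∈ (flatsF M).filter (fun F => F ≠ ∅ ∧ F ≠ Finset.univ ∧ i ∈ F),
      betaInv (M ↾ (↑F : Set (Fin (n + 1)))) * betaInv (mContr M ↑F) =
    (-1) ^ rk M M.E * ∑ H ∈ flatsF M, mob (flatsF M) ∅ H *
      ((rk M ↑H : ℤ) ^ 2 + rk M ↑H - 2 * rk M M.E * rk M ↑H) := by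
  classical
  have h0 : ∅ ∈ flatsF M := by
    rw [mem_flatsF, Finset.coe_empty, isFlat_iff_closure_eq]
    exact (mLoopless_iff.1 hM).loops_eq_empty
  have hu : Finset.univ ∈ flatsF M := by
    rw [mem_flatsF, Finset.coe_univ, ← hE]
    exact M.ground_isFlat
  have hcl : ∀ X : Set (Fin (n + 1)), ((M.closure X).toFinset : Set (Fin (n + 1))) = M.closure X :=
    fun X => Set.coe_toFinset _
  have key := two_mul_sum_beta (L := flatsF M) (i := i) (E := Finset.univ)
    (c := fun H => (M.closure (insert i (H : Set (Fin (n + 1))))).toFinset)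
    (r := fun H => (rk M ↑H : ℤ)) h0 hu (fun F _ => Finset.subset_univ F) (Finset.mem_univ i)
    (fun H _ => by rw [mem_flatsF, hcl]; exact M.isFlat_closure _)
    (fun H _ => by
      rw [Set.mem_toFinset]
      exact M.mem_closure_of_mem' (Set.mem_insert _ _) (hE ▸ Set.mem_univ i))
    (fun H _ G hG hiG => by
      rw [← Finset.coe_subset, hcl, ← Finset.coe_subset]
      rw [mem_flatsF] at hG
      refine ⟨fun h => ?_, fun h => ?_⟩
      · exact ((Set.subset_insert _ _).trans
          (M.subset_closure _ (hE ▸ Set.subset_univ _))).trans h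
      · rw [← hG.closure]
        exact M.closure_subset_closure (Set.insert_subset hiG h))
    (fun H hH => by
      rw [mem_flatsF] at hH
      rw [hcl]
      split_ifs with hi
      · rw [Set.insert_eq_of_mem (Finset.mem_coe.2 hi), hH.closure, add_zero]
      · rw [rk_closure_insert_of_notMem (hE ▸ Set.mem_univ i) (by rwa [hH.closure]), Nat.cast_add,
          Nat.cast_one])
  simp only [Finset.coe_univ, ← hE] at key
  rw [← key, mul_left_comm]
  refine congrArg _ ?_
  rw [Finset.mul_sum]
  refine Finset.sum_subset_zero_on_sdiff (fun F hF => ?_) (fun F hF => ?_) (fun F hF => ?_)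
  · simp only [Finset.mem_filter] at hF ⊢
    exact ⟨hF.1, hF.2.2.2⟩
  · simp only [Finset.mem_sdiff, Finset.mem_filter, not_and] at hF
    obtain ⟨⟨hFL, hiF⟩, hF⟩ := hF
    have hFu : F = Finset.univ := by
      by_contra h
      exact hF hFL (Finset.ne_empty_of_mem hiF) h hiF
    refine mul_eq_zero_of_right _ (mul_eq_zero_of_right _ (Finset.sum_eq_zero fun K _ => ?_))
    by_cases hK : F ⊆ K
    · rw [hFu, Finset.univ_subset_iff] at hK
      rw [hK, hFu, sub_self, mul_zero]
    · rw [mob_eq_zero hK, zero_mul]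
  · have hFL := (Finset.mem_filter.1 hF).1
    have hadd := rk_contract_add (M := M) (X := M.E) (F := ↑F) (hE ▸ Set.subset_univ _)
    rw [betaInv_restrict hM hFL, betaInv_contract hFL, mul_mul_mul_comm, ← pow_add,
      Nat.add_sub_cancel' (by omega)]

end Beta

/-- For a loopless matroid `M` on the ground set `{0,…,n}`, the quantity
`∑_{F ∋ i} β(M|F)·β(M/F)`, summed over all flats `F` with `∅ ≠ F ≠ E` containing `i`,
does not depend on the element `i`. -/
theorem beta_sum_indep_of_element {n : ℕ} (M : Matroid (Fin (n + 1)))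
    (hE : M.E = Set.univ) (hM : mLoopless M) (i j : Fin (n + 1)) :
    ∑ F ∈ (flatsF M).filter (fun F => F ≠ ∅ ∧ F ≠ Finset.univ ∧ i ∈ F),
      betaInv (M ↾ (↑F : Set (Fin (n + 1)))) * betaInv (mContr M ↑F)
    = ∑ F ∈ (flatsF M).filter (fun F => F ≠ ∅ ∧ F ≠ Finset.univ ∧ j ∈ F),
      betaInv (M ↾ (↑F : Set (Fin (n + 1)))) * betaInv (mContr M ↑F) := by
  have h := (two_mul_sum_betaInv hE hM i).trans (two_mul_sum_betaInv hE hM j).symm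
  exact mul_left_cancel₀ two_ne_zero h
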